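/- arXiv:1310.0081 — 3 statements merged into one kernel-verified Lean document; each statement's English description precedes it below -/
import Mathlib

section
/- Let Ω ⊆ ℝ² be open and let X : Ω → ℝ² be a real-analytic vector field. Let U ⊆ Ω be a connected open set whose closure cl U is compact and contained in Ω, let K := {p ∈ cl U : X(p) = 0}, assume K ⊆ U, and assume K is essential: there exists ε > 0 such that every continuous map X' : cl U → ℝ² with ‖X'(p) − X(p)‖ < ε for all p ∈ cl U has a zero in cl U. Let Y₁, …, Y_d : Ω → ℝ² be real-analytic vector fields such that: (1) each Y_i tracks X, i.e. there are continuous f_i : Ω → ℝ with DX(p)(Y_i(p)) − DY_i(p)(X(p)) = f_i(p) • X(p) for all p; and (2) for all indices 1 ≤ i ≤ d and 1 ≤ j ≤ k ≤ d, the bracket [Y_i, Y_j](p) = DY_j(p)(Y_i(p)) − DY_i(p)(Y_j(p)) is a real linear combination of Y₁, …, Y_k, i.e. there exist constants c_{ijk,m} ∈ ℝ (1 ≤ m ≤ k) with [Y_i, Y_j] = Σ_{m=1}^{k} c_{ijk,m} • Y_m as functions on Ω. Then there exists p ∈ K with Y_i(p) = 0 for all i = 1, …, d. -/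
open Set

/-!
Suppose the fields `Yᵢ` have no common zero among the zeros of `X`, and at a zero `p` let `Y` be the
first `Yᵢ` with `Yᵢ p ≠ 0`. Tracking says that along the flow of `Y` both `X` and the area form
`ω(X, Y)` satisfy linear differential equations, so by Grönwall their values at `q` near `p` are
comparable to those at the point where the orbit of `q` meets the line through `p` orthogonal to
`Y p`. On that line analyticity gives `X = sᵏ g` with `g ≠ 0`. Hence the zeros of `X` near `p` lie
on the orbit of `p`, and either `X` is uniformly transverse to `Y` near all of them or it is tangent
to `Y` in the limit at all of them. In the second case `X` is transverse to `Y` rotated by a right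
angle. Supersolvability makes the index of the first nonvanishing field constant along the orbit, so
the transverse direction can be chosen continuously on the zero set of `X`. Extended by Tietze to a
field `v`, it gives zero-free perturbations `X + δ v`, contradicting essentiality.
-/

namespace PlanarTracking

open Filter Topology Asymptotics Metric VectorField Module

section IntegralCurve

variable {E F : Type*} [NormedAddCommGroup E] [NormedSpace ℝ E]
  [NormedAddCommGroup F] [NormedSpace ℝ F] {Y : E → E} {N S : Set E} {p q : E}

lemma norm_le_mul_exp_of_norm_deriv_le_of_le {g g' : ℝ → F} {C a b : ℝ} (hab : a ≤ b)
    (hg : ∀ t ∈ Icc a b, HasDerivAt g (g' t) t)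
    (bound : ∀ t ∈ Icc a b, ‖g' t‖ ≤ C * ‖g t‖) :
    ‖g b‖ ≤ ‖g a‖ * Real.exp (C * (b - a)) := by
  have h := norm_le_gronwallBound_of_norm_deriv_right_le (ε := 0)
    (fun t ht ↦ (hg t ht).continuousAt.continuousWithinAt)
    (fun t ht ↦ (hg t (Ico_subset_Icc_self ht)).hasDerivWithinAt) le_rfl
    (fun t ht ↦ by simpa using bound t (Ico_subset_Icc_self ht)) b ⟨hab, le_rfl⟩
  rwa [gronwallBound_ε0] at h

lemma norm_le_mul_exp_of_norm_deriv_le {g g' : ℝ → F} {C a b : ℝ}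
    (hg : ∀ t ∈ uIcc a b, HasDerivAt g (g' t) t)
    (bound : ∀ t ∈ uIcc a b, ‖g' t‖ ≤ C * ‖g t‖) :
    ‖g b‖ ≤ ‖g a‖ * Real.exp (C * |b - a|) := by
  rcases le_total a b with hab | hba
  · rw [uIcc_of_le hab] at hg bound
    simpa only [abs_of_nonneg (sub_nonneg.2 hab)] using
      norm_le_mul_exp_of_norm_deriv_le_of_le hab hg bound
  · rw [uIcc_of_ge hba] at hg bound
    have hneg : ∀ t ∈ Icc (-a) (-b), -t ∈ Icc b a := fun t ht ↦
      ⟨le_neg_of_le_neg ht.2, neg_le_of_neg_le ht.1⟩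
    have h := norm_le_mul_exp_of_norm_deriv_le_of_le (g := fun t ↦ g (-t))
      (g' := fun t ↦ -g' (-t)) (neg_le_neg hba)
      (fun t ht ↦ by
        simpa [Function.comp_def] using (hg (-t) (hneg t ht)).scomp t (hasDerivAt_neg t))
      (fun t ht ↦ by simpa only [norm_neg] using bound (-t) (hneg t ht))
    simpa only [neg_neg, neg_sub_neg, abs_of_nonpos (sub_nonpos.2 hba), neg_sub] using h

/-- `p` and `q` are joined, in time at most one (forward or backward), by an integral curve of `Y`
that stays in `N`. The bound on the time makes Grönwall estimates uniform in the endpoints. -/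
def FlowJoined (Y : E → E) (N : Set E) (p q : E) : Prop :=
  ∃ (γ : ℝ → E) (T : ℝ), |T| ≤ 1 ∧ γ 0 = p ∧ γ T = q ∧
    ∀ t ∈ uIcc 0 T, HasDerivAt γ (Y (γ t)) t ∧ γ t ∈ N

namespace FlowJoined

lemma symm (h : FlowJoined Y N p q) : FlowJoined Y N q p := by
  obtain ⟨γ, T, hT, h0, h1, hγ⟩ := h
  refine ⟨fun t ↦ γ (T + t), -T, by rwa [abs_neg], by simpa using h1, by simpa using h0,
    fun t ht ↦ ?_⟩
  have hmem : T + t ∈ uIcc 0 T := by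
    simp only [mem_uIcc] at ht ⊢
    rcases ht with ht | ht
    · exact Or.inr ⟨by linarith, by linarith⟩
    · exact Or.inl ⟨by linarith, by linarith⟩
  exact ⟨(hγ _ hmem).1.comp_const_add T t, (hγ _ hmem).2⟩

lemma inter (h : FlowJoined Y N p q) (hS : ∀ x, FlowJoined Y N p x → x ∈ S) :
    FlowJoined Y (N ∩ S) p q := by
  obtain ⟨γ, T, hT, h0, h1, hγ⟩ := h
  refine ⟨γ, T, hT, h0, h1, fun t ht ↦ ⟨(hγ t ht).1, (hγ t ht).2, hS _ ⟨γ, t, ?_, h0, rfl, ?_⟩⟩⟩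
  · have habs : |t| ≤ |T| := by simpa using abs_sub_left_of_mem_uIcc ht
    exact habs.trans hT
  · exact fun s hs ↦ hγ s (uIcc_subset_uIcc_left ht hs)

lemma norm_le {g : E → F} {C : ℝ} (hC : 0 ≤ C) (h : FlowJoined Y N p q)
    (hg : ∀ x ∈ N, DifferentiableAt ℝ g x) (bound : ∀ x ∈ N, ‖fderiv ℝ g x (Y x)‖ ≤ C * ‖g x‖) :
    ‖g q‖ ≤ Real.exp C * ‖g p‖ := by
  obtain ⟨γ, T, hT, rfl, rfl, hγ⟩ := h
  calc ‖g (γ T)‖ ≤ ‖g (γ 0)‖ * Real.exp (C * |T - 0|) :=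
        norm_le_mul_exp_of_norm_deriv_le (g := g ∘ γ)
          (fun t ht ↦ (hg _ (hγ t ht).2).hasFDerivAt.comp_hasDerivAt t (hγ t ht).1)
          (fun t ht ↦ bound _ (hγ t ht).2)
    _ ≤ ‖g (γ 0)‖ * Real.exp C := by
        rw [sub_zero]
        gcongr
        exact mul_le_of_le_one_right hC hT
    _ = Real.exp C * ‖g (γ 0)‖ := mul_comm _ _

lemma eq_zero {g : E → F} {C : ℝ} (hC : 0 ≤ C) (h : FlowJoined Y N p q)
    (hg : ∀ x ∈ N, DifferentiableAt ℝ g x) (bound : ∀ x ∈ N, ‖fderiv ℝ g x (Y x)‖ ≤ C * ‖g x‖)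
    (hp : g p = 0) : g q = 0 := by
  simpa [hp] using h.norm_le hC hg bound

lemma isTheta {g : E → F} {C : ℝ} {l : Filter E} {Φ : E → E} (hC : 0 ≤ C)
    (h : ∀ᶠ x in l, FlowJoined Y N x (Φ x)) (hg : ∀ x ∈ N, DifferentiableAt ℝ g x)
    (bound : ∀ x ∈ N, ‖fderiv ℝ g x (Y x)‖ ≤ C * ‖g x‖) : g =Θ[l] (g ∘ Φ) :=
  ⟨.of_bound (Real.exp C) (h.mono fun _ hx ↦ hx.symm.norm_le hC hg bound),
    .of_bound (Real.exp C) (h.mono fun _ hx ↦ hx.norm_le hC hg bound)⟩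

end FlowJoined

end IntegralCurve

attribute [local instance] FiniteDimensional.of_fact_finrank_eq_two

lemma wellFoundedLT_of_locallyFiniteOrderBot {ι : Type*} [Preorder ι] [LocallyFiniteOrderBot ι] :
    WellFoundedLT ι :=
  ⟨Subrelation.wf (fun h ↦ Finset.card_lt_card (Finset.Iio_ssubset_Iio h))
    (measure fun i : ι ↦ (Finset.Iio i).card).wf⟩

attribute [local instance] wellFoundedLT_of_locallyFiniteOrderBot

section Bracket

variable {E : Type*} [NormedAddCommGroup E] [NormedSpace ℝ E]

/-- The vector field `Y` tracks `X` on `Ω`: the bracket `[Y, X]` is a continuous multiple of `X`. -/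
def TracksOn (Y X : E → E) (Ω : Set E) : Prop :=
  ∃ f : E → ℝ, ContinuousOn f Ω ∧ ∀ p ∈ Ω, lieBracket ℝ Y X p = f p • X p

lemma norm_fderiv_le_of_lieBracket_eq_smul {X Y : E → E} {p : E} {c : ℝ}
    (h : lieBracket ℝ Y X p = c • X p) :
    ‖fderiv ℝ X p (Y p)‖ ≤ (‖fderiv ℝ Y p‖ + |c|) * ‖X p‖ := by
  rw [lieBracket_eq, sub_eq_iff_eq_add'] at h
  calc ‖fderiv ℝ X p (Y p)‖ ≤ ‖fderiv ℝ Y p (X p)‖ + ‖c • X p‖ := h ▸ norm_add_le _ _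
    _ ≤ ‖fderiv ℝ Y p‖ * ‖X p‖ + |c| * ‖X p‖ := by
        rw [norm_smul, Real.norm_eq_abs]
        gcongr
        exact ContinuousLinearMap.le_opNorm _ _
    _ = (‖fderiv ℝ Y p‖ + |c|) * ‖X p‖ := by ring

variable {ι : Type*} [LinearOrder ι] [LocallyFiniteOrderBot ι] {Y : ι → E → E} {Ω Q : Set E}
  {i : ι} {p q : E}

/-- A weak form of supersolvability: for `j < i`, the bracket `[Yᵢ, Yⱼ]` is on `Ω` a combination of
the `Yₘ`, `m ≤ j`, whose coefficients are continuous functions rather than constants. -/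
def IsTriangularOn (Y : ι → E → E) (Ω : Set E) : Prop :=
  ∀ i j, j < i → ∃ c : ι → E → ℝ, (∀ m, ContinuousOn (c m) Ω) ∧
    ∀ p ∈ Ω, lieBracket ℝ (Y i) (Y j) p = ∑ m ∈ Finset.Iic j, c m p • Y m p

namespace IsTriangularOn

lemma eq_zero_of_flowJoined (h : IsTriangularOn Y Ω) (hΩ : IsOpen Ω)
    (hY : ∀ j, ContDiffOn ℝ 1 (Y j) Ω) (hQ : IsCompact Q) (hQΩ : Q ⊆ Ω)
    (hp : ∀ j < i, Y j p = 0) {j : ι} (hji : j < i) (hpq : FlowJoined (Y i) Q p q) :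
    Y j q = 0 := by
  induction j using WellFoundedLT.induction generalizing q with
  | ind j ih =>
    obtain ⟨c, hc, hbracket⟩ := h i j hji
    have hpq' : FlowJoined (Y i) (Q ∩ {x | ∀ m < j, Y m x = 0}) p q :=
      hpq.inter fun x hx m hm ↦ ih m hm (hm.trans hji) hx
    have hDY : ContinuousOn (fderiv ℝ (Y i)) Ω := (hY i).continuousOn_fderiv_of_isOpen hΩ le_rfl
    obtain ⟨C, hC⟩ := hQ.bddAbove_image ((hDY.norm.add (hc j).abs).mono hQΩ)
    refine hpq'.eq_zero (le_max_right C 0) (fun x hx ↦ ?_) (fun x hx ↦ ?_) (hp j hji)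
    · exact ((hY j).differentiableOn one_ne_zero).differentiableAt (hΩ.mem_nhds (hQΩ hx.1))
    · have hsum : lieBracket ℝ (Y i) (Y j) x = c j x • Y j x := by
        rw [hbracket x (hQΩ hx.1)]
        refine Finset.sum_eq_single_of_mem j (by simp) fun m hm hmj ↦ ?_
        rw [hx.2 m ((Finset.mem_Iic.1 hm).lt_of_ne hmj), smul_zero]
      refine (norm_fderiv_le_of_lieBracket_eq_smul hsum).trans ?_
      gcongr
      exact (hC (mem_image_of_mem _ hx.1)).trans (le_max_left _ _)

end IsTriangularOn

end Bracket

section FlowBox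

lemma exists_localFlow_mem {E : Type*} [NormedAddCommGroup E] [NormedSpace ℝ E] [CompleteSpace E]
    {Y : E → E} {p : E} {N : Set E} (hY : ContDiffAt ℝ 1 Y p) (hN : N ∈ 𝓝 p) :
    ∃ T > 0, T ≤ 1 ∧ ∃ V ∈ 𝓝 p, ∃ α : E × ℝ → E, ContinuousOn α (V ×ˢ Icc (-T) T) ∧
      ∀ x ∈ V, α (x, 0) = x ∧
        ∀ t ∈ Icc (-T) T, HasDerivAt (fun s ↦ α (x, s)) (Y (α (x, t))) t ∧ α (x, t) ∈ N := by
  obtain ⟨ε, hε, a, r, L, K, hr, hPL⟩ := IsPicardLindelof.of_contDiffAt_one hY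
  obtain ⟨α, hα, hαc⟩ :=
    (hPL 0).exists_forall_mem_closedBall_eq_hasDerivWithinAt_continuousOn
  simp only [zero_sub, zero_add] at hα hαc
  have hball : closedBall p r ∈ 𝓝 p := closedBall_mem_nhds p hr
  have hcont : ContinuousAt α (p, 0) :=
    hαc.continuousAt (prod_mem_nhds hball (Icc_mem_nhds (neg_lt_zero.2 hε) hε))
  have hαN : α ⁻¹' N ∈ 𝓝 p ×ˢ 𝓝 (0 : ℝ) := by
    rw [← nhds_prod_eq]
    exact hcont (by rwa [(hα p (mem_closedBall_self hr.le)).1])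
  obtain ⟨V, hV, I, hI, hVI⟩ := mem_prod_iff.1 hαN
  obtain ⟨δ, hδ, hδI⟩ := Metric.nhds_basis_closedBall.mem_iff.1 hI
  rw [Real.closedBall_eq_Icc, zero_sub, zero_add] at hδI
  set T := min (min (ε / 2) δ) 1
  have hTδ : T ≤ δ := (min_le_left _ _).trans (min_le_right _ _)
  have hTε : T < ε := ((min_le_left _ _).trans (min_le_left _ _)).trans_lt (half_lt_self hε)
  refine ⟨T, by positivity, min_le_right _ _, closedBall p r ∩ V, inter_mem hball hV, α,
    hαc.mono (prod_mono inter_subset_left (Icc_subset_Icc (neg_le_neg hTε.le) hTε.le)),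
    fun x hx ↦ ⟨(hα x hx.1).1, fun t ht ↦ ?_⟩⟩
  have hlo : -ε < t := (neg_lt_neg hTε).trans_le ht.1
  have hhi : t < ε := ht.2.trans_lt hTε
  exact ⟨((hα x hx.1).2 t ⟨hlo.le, hhi.le⟩).hasDerivAt (Icc_mem_nhds hlo hhi),
    hVI ⟨hx.2, hδI ⟨(neg_le_neg hTδ).trans ht.1, ht.2.trans hTδ⟩⟩⟩

lemma mul_abs_sub_le_abs_sub {h : ℝ → ℝ} {I : Set ℝ} {c : ℝ}
    (hmono : ∀ s ∈ I, ∀ t ∈ I, s ≤ t → c * (t - s) ≤ h t - h s) {s t : ℝ} (hs : s ∈ I)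
    (ht : t ∈ I) : c * |t - s| ≤ |h t - h s| := by
  rcases le_total s t with hst | hts
  · rw [abs_of_nonneg (sub_nonneg.2 hst)]
    exact (hmono s hs t ht hst).trans (le_abs_self _)
  · rw [abs_sub_comm t, abs_sub_comm (h t), abs_of_nonneg (sub_nonneg.2 hts)]
    exact (hmono t ht s hs hts).trans (le_abs_self _)

lemma exists_continuousOn_zero_of_mul_sub_le {Z : Type*} [TopologicalSpace Z] {V : Set Z}
    {G : Z × ℝ → ℝ} {T c : ℝ} (hc : 0 < c) (hT : 0 ≤ T) (hG : ContinuousOn G (V ×ˢ Icc (-T) T))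
    (hmono : ∀ x ∈ V, ∀ s ∈ Icc (-T) T, ∀ t ∈ Icc (-T) T, s ≤ t →
      c * (t - s) ≤ G (x, t) - G (x, s))
    (h0 : ∀ x ∈ V, |G (x, 0)| ≤ c * T) :
    ∃ τ : Z → ℝ, ContinuousOn τ V ∧ ∀ x ∈ V, τ x ∈ Icc (-T) T ∧
      ∀ t ∈ Icc (-T) T, G (x, t) = 0 ↔ t = τ x := by
  have hTT : -T ≤ T := (neg_nonpos.2 hT).trans hT
  have hzero : ∀ x, ∃ t, x ∈ V → t ∈ Icc (-T) T ∧ G (x, t) = 0 := fun x ↦ by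
    by_cases hx : x ∈ V
    · have hlo := hmono x hx (-T) ⟨le_rfl, hTT⟩ 0 ⟨neg_nonpos.2 hT, hT⟩ (neg_nonpos.2 hT)
      have hhi := hmono x hx 0 ⟨neg_nonpos.2 hT, hT⟩ T ⟨hTT, le_rfl⟩ hT
      obtain ⟨h0l, h0r⟩ := abs_le.1 (h0 x hx)
      obtain ⟨t, ht, hGt⟩ := intermediate_value_Icc hTT
        (hG.comp (f := fun t ↦ (x, t)) (by fun_prop) fun t ht ↦ ⟨hx, ht⟩)
        (show (0 : ℝ) ∈ Icc (G (x, -T)) (G (x, T)) from ⟨by linarith, by linarith⟩)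
      exact ⟨t, fun _ ↦ ⟨ht, hGt⟩⟩
    · exact ⟨0, fun h ↦ (hx h).elim⟩
  choose τ hτ using hzero
  have hexp : ∀ x ∈ V, ∀ s ∈ Icc (-T) T, c * |τ x - s| ≤ |G (x, s)| := fun x hx s hs ↦ by
    simpa [(hτ x hx).2] using mul_abs_sub_le_abs_sub (hmono x hx) hs (hτ x hx).1
  refine ⟨τ, fun y hy ↦ ?_, fun x hx ↦ ⟨(hτ x hx).1, fun t ht ↦ ⟨fun hGt ↦ ?_, ?_⟩⟩⟩
  rotate_left
  · have habs := hexp x hx t ht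
    rw [hGt, abs_zero] at habs
    exact (sub_eq_zero.1 (abs_nonpos_iff.1 (nonpos_of_mul_nonpos_right habs hc))).symm
  · rintro rfl
    exact (hτ x hx).2
  have hlim : Tendsto (fun x ↦ |G (x, τ y)| / c) (𝓝[V] y) (𝓝 0) := by
    have hGy : ContinuousWithinAt (fun x ↦ G (x, τ y)) V y :=
      hG.comp (f := fun x ↦ (x, τ y)) (by fun_prop) (fun x hx ↦ ⟨hx, (hτ y hy).1⟩) y hy
    simpa [(hτ y hy).2] using hGy.tendsto.abs.div_const c
  refine tendsto_iff_dist_tendsto_zero.2 (squeeze_zero' (.of_forall fun _ ↦ dist_nonneg)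
    (eventually_mem_nhdsWithin.mono fun x hx ↦ ?_) hlim)
  rw [Real.dist_eq, le_div_iff₀' hc]
  exact hexp x hx _ (hτ y hy).1

variable {E : Type*} [NormedAddCommGroup E] [InnerProductSpace ℝ E]

lemma mul_sub_le_inner_sub_inner {γ : ℝ → E} {γ' : ℝ → E} {v w : E} {a b c : ℝ}
    (hγ : ∀ t ∈ Icc a b, HasDerivAt γ (γ' t) t) (hc : ∀ t ∈ Icc a b, c ≤ inner ℝ v (γ' t)) :
    ∀ s ∈ Icc a b, ∀ t ∈ Icc a b, s ≤ t →
      c * (t - s) ≤ inner ℝ v (γ t - w) - inner ℝ v (γ s - w) := by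
  have hderiv : ∀ t ∈ Icc a b, HasDerivAt (fun s ↦ inner ℝ v (γ s - w)) (inner ℝ v (γ' t)) t :=
    fun t ht ↦ by simpa using (hasDerivAt_const t v).inner ℝ ((hγ t ht).sub_const w)
  refine (convex_Icc a b).mul_sub_le_image_sub_of_le_deriv
    (fun t ht ↦ (hderiv t ht).continuousAt.continuousWithinAt)
    (fun t ht ↦ (hderiv t (interior_subset ht)).differentiableAt.differentiableWithinAt)
    fun t ht ↦ ?_
  rw [(hderiv t (interior_subset ht)).deriv]
  exact hc t (interior_subset ht)

lemma exists_flowProjection [CompleteSpace E] {Y : E → E} {p : E} {N : Set E}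
    (hY : ContDiffAt ℝ 1 Y p) (hYp : Y p ≠ 0) (hN : N ∈ 𝓝 p) :
    ∃ π : E → E, π p = p ∧ ∀ᶠ q in 𝓝 p,
      ContinuousAt π q ∧ inner ℝ (Y p) (π q - p) = 0 ∧ FlowJoined Y N q (π q) := by
  set c := ‖Y p‖ ^ 2 / 2
  have hc : 0 < c := by positivity
  have hspeed : ∀ᶠ x in 𝓝 p, c < inner ℝ (Y p) (Y x) :=
    (continuousAt_const.inner hY.continuousAt).eventually_const_lt <| by
      simpa only [real_inner_self_eq_norm_sq] using half_lt_self (by positivity)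
  obtain ⟨T, hT, hT1, V, hV, α, hαc, hα⟩ := exists_localFlow_mem hY (inter_mem hN hspeed)
  set W := V ∩ {x | |inner ℝ (Y p) (x - p)| ≤ c * T}
  have hW : W ∈ 𝓝 p := by
    have hcont : Continuous fun x ↦ |inner ℝ (Y p) (x - p)| := by fun_prop
    exact inter_mem hV (hcont.continuousAt.eventually_le_const (by simpa using mul_pos hc hT))
  have hαW : ContinuousOn α (W ×ˢ Icc (-T) T) := hαc.mono (prod_mono_left inter_subset_left)
  have hmono : ∀ x ∈ W, ∀ s ∈ Icc (-T) T, ∀ t ∈ Icc (-T) T, s ≤ t →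
      c * (t - s) ≤ inner ℝ (Y p) (α (x, t) - p) - inner ℝ (Y p) (α (x, s) - p) := fun x hx ↦
    mul_sub_le_inner_sub_inner (fun t ht ↦ ((hα x hx.1).2 t ht).1)
      fun t ht ↦ ((hα x hx.1).2 t ht).2.2.le
  obtain ⟨τ, hτc, hτ⟩ := exists_continuousOn_zero_of_mul_sub_le hc hT.le
    (G := fun z ↦ inner ℝ (Y p) (α z - p))
    (continuousOn_const.inner (hαW.sub continuousOn_const)) hmono
    fun x hx ↦ by
      rw [(hα x hx.1).1]
      exact hx.2
  have hpW := mem_of_mem_nhds hW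
  have h0 : (0 : ℝ) ∈ Icc (-T) T := ⟨neg_nonpos.2 hT.le, hT.le⟩
  have hτp : 0 = τ p := ((hτ p hpW).2 0 h0).1 (by simp [(hα p hpW.1).1])
  refine ⟨fun q ↦ α (q, τ q), by simp only [← hτp, (hα p hpW.1).1],
    (eventually_mem_nhds_iff.2 hW).mono fun q hq ↦ ?_⟩
  have hqW := mem_of_mem_nhds hq
  obtain ⟨hα0, hαq⟩ := hα q hqW.1
  refine ⟨(hαW.comp (f := fun x ↦ (x, τ x)) (continuousOn_id.prodMk hτc)
    fun x hx ↦ ⟨hx, (hτ x hx).1⟩).continuousAt hq,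
    ((hτ q hqW).2 _ (hτ q hqW).1).2 rfl,
    fun t ↦ α (q, t), τ q, (abs_le.2 (hτ q hqW).1).trans hT1, hα0, rfl, fun t ht ↦ ?_⟩
  obtain ⟨hYt, hNt, -⟩ :=
    hαq t (uIcc_subset_Icc h0 (hτ q hqW).1 ht)
  exact ⟨hYt, hNt⟩

end FlowBox

section Plane

variable {E : Type*} [NormedAddCommGroup E] [InnerProductSpace ℝ E] [Fact (finrank ℝ E = 2)]
  (o : Orientation ℝ E (Fin 2))

lemma norm_sq_smul_eq_inner_smul_add_areaForm_smul (u v : E) :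
    ‖u‖ ^ 2 • v = inner ℝ u v • u + o.areaForm u v • o.rightAngleRotation u := by
  refine ext_inner_left ℝ fun w ↦ ?_
  simp only [inner_add_right, inner_smul_right, o.inner_rightAngleRotation_right]
  rw [o.areaForm_swap w u, real_inner_comm u w, neg_neg, real_inner_comm v w,
    o.inner_mul_inner_add_areaForm_mul_areaForm]

lemma abs_areaForm_map_add_le (A : E →L[ℝ] E) (u v : E) :
    |o.areaForm (A u) v + o.areaForm u (A v)| ≤ 2 * ‖A‖ * |o.areaForm u v| := by
  rcases eq_or_ne u 0 with rfl | hu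
  · simp
  set J := o.rightAngleRotation
  set B : E → ℝ := fun w ↦ o.areaForm (A u) w + o.areaForm u (A w) with hB
  have hBv : ‖u‖ ^ 2 * B v = o.areaForm u v * B (J u) := by
    have h := congrArg B (norm_sq_smul_eq_inner_smul_add_areaForm_smul o u v)
    simp only [hB, map_add, map_smul, smul_eq_mul] at h ⊢
    linear_combination h + inner ℝ u v * o.areaForm_swap u (A u)
  have hBJ : |B (J u)| ≤ 2 * ‖A‖ * ‖u‖ ^ 2 := by
    have hAJ : |o.areaForm (A u) (J u)| ≤ ‖A‖ * ‖u‖ * ‖u‖ := by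
      simpa [J] using (o.abs_areaForm_le (A u) (J u)).trans
        (mul_le_mul_of_nonneg_right (A.le_opNorm u) (norm_nonneg (J u)))
    have hJA : |o.areaForm u (A (J u))| ≤ ‖u‖ * (‖A‖ * ‖u‖) := by
      simpa [J] using (o.abs_areaForm_le u (A (J u))).trans
        (mul_le_mul_of_nonneg_left (A.le_opNorm (J u)) (norm_nonneg u))
    exact (abs_add_le _ _).trans (by linarith)
  have hu2 : 0 < ‖u‖ ^ 2 := by positivity
  refine le_of_mul_le_mul_left ?_ hu2
  calc ‖u‖ ^ 2 * |B v| = |o.areaForm u v| * |B (J u)| := by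
        rw [← abs_mul, ← hBv, abs_mul, abs_of_pos hu2]
    _ ≤ |o.areaForm u v| * (2 * ‖A‖ * ‖u‖ ^ 2) := by gcongr
    _ = ‖u‖ ^ 2 * (2 * ‖A‖ * |o.areaForm u v|) := by ring

lemma exists_flowProjection_coordinate {Y : E → E} {p : E} {N : Set E} (hY : ContDiffAt ℝ 1 Y p)
    (hYp : Y p ≠ 0) (hN : N ∈ 𝓝 p) :
    ∃ σ : E → ℝ, σ p = 0 ∧ ∀ᶠ q in 𝓝 p,
      ContinuousAt σ q ∧ FlowJoined Y N q (p + σ q • o.rightAngleRotation (Y p)) := by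
  obtain ⟨π, hπp, hπ⟩ := exists_flowProjection hY hYp hN
  refine ⟨fun q ↦ (‖Y p‖ ^ 2)⁻¹ * o.areaForm (Y p) (π q - p), by simp [hπp], ?_⟩
  filter_upwards [hπ] with q ⟨hcont, hperp, hjoin⟩
  refine ⟨continuousAt_const.mul <|
    (o.areaForm' (Y p)).continuous.continuousAt.comp (hcont.sub continuousAt_const), ?_⟩
  have hπq : π q - p = (‖Y p‖ ^ 2)⁻¹ • o.areaForm (Y p) (π q - p) • o.rightAngleRotation (Y p) := by
    rw [eq_inv_smul_iff₀ (by positivity), norm_sq_smul_eq_inner_smul_add_areaForm_smul o, hperp,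
      zero_smul, zero_add]
  rwa [mul_smul, ← hπq, add_sub_cancel]

section Tracking

variable {X Y : E → E} {p : E} {c : ℝ}

lemma differentiableAt_areaForm (hX : DifferentiableAt ℝ X p) (hY : DifferentiableAt ℝ Y p) :
    DifferentiableAt ℝ (fun x ↦ o.areaForm (X x) (Y x)) p :=
  (o.areaForm'.hasFDerivAt_of_bilinear hX.hasFDerivAt hY.hasFDerivAt).differentiableAt

lemma fderiv_areaForm_apply (hX : DifferentiableAt ℝ X p) (hY : DifferentiableAt ℝ Y p) (v : E) :
    fderiv ℝ (fun x ↦ o.areaForm (X x) (Y x)) p v =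
      o.areaForm (fderiv ℝ X p v) (Y p) + o.areaForm (X p) (fderiv ℝ Y p v) := by
  have h := o.areaForm'.hasFDerivAt_of_bilinear hX.hasFDerivAt hY.hasFDerivAt
  simpa [add_comm] using congr($h.fderiv v)

lemma norm_fderiv_areaForm_le_of_lieBracket_eq_smul (hX : DifferentiableAt ℝ X p)
    (hY : DifferentiableAt ℝ Y p) (h : lieBracket ℝ Y X p = c • X p) :
    ‖fderiv ℝ (fun x ↦ o.areaForm (X x) (Y x)) p (Y p)‖ ≤
      (2 * ‖fderiv ℝ Y p‖ + |c|) * ‖o.areaForm (X p) (Y p)‖ := by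
  rw [lieBracket_eq, sub_eq_iff_eq_add'] at h
  rw [fderiv_areaForm_apply o hX hY, h, map_add, map_smul, LinearMap.add_apply,
    LinearMap.smul_apply, smul_eq_mul, add_right_comm, Real.norm_eq_abs, Real.norm_eq_abs]
  calc |o.areaForm (fderiv ℝ Y p (X p)) (Y p) + o.areaForm (X p) (fderiv ℝ Y p (Y p)) +
        c * o.areaForm (X p) (Y p)|
      ≤ 2 * ‖fderiv ℝ Y p‖ * |o.areaForm (X p) (Y p)| + |c| * |o.areaForm (X p) (Y p)| := by
        rw [← abs_mul c]
        exact (abs_add_le _ _).trans (by gcongr; exact abs_areaForm_map_add_le o _ _ _)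
    _ = (2 * ‖fderiv ℝ Y p‖ + |c|) * |o.areaForm (X p) (Y p)| := by ring

namespace TracksOn

variable {Ω Q : Set E} {l : Filter E} {Φ : E → E}

lemma exists_bound (h : TracksOn Y X Ω) (hΩ : IsOpen Ω) (hX : DifferentiableOn ℝ X Ω)
    (hY : ContDiffOn ℝ 1 Y Ω) (hQ : IsCompact Q) (hQΩ : Q ⊆ Ω) :
    ∃ C, 0 ≤ C ∧ ∀ x ∈ Q, ‖fderiv ℝ X x (Y x)‖ ≤ C * ‖X x‖ ∧
      ‖fderiv ℝ (fun x ↦ o.areaForm (X x) (Y x)) x (Y x)‖ ≤ C * ‖o.areaForm (X x) (Y x)‖ := by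
  obtain ⟨f, hf, hYX⟩ := h
  have hDY : ContinuousOn (fderiv ℝ Y) Ω := hY.continuousOn_fderiv_of_isOpen hΩ le_rfl
  have hcont : ContinuousOn (fun x ↦ 2 * ‖fderiv ℝ Y x‖ + |f x|) Q :=
    ((continuousOn_const.mul hDY.norm).add hf.abs).mono hQΩ
  obtain ⟨C, hC⟩ := hQ.bddAbove_image hcont
  refine ⟨max C 0, le_max_right _ _, fun x hx ↦ ?_⟩
  have hxC : 2 * ‖fderiv ℝ Y x‖ + |f x| ≤ max C 0 :=
    (hC (mem_image_of_mem _ hx)).trans (le_max_left _ _)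
  have hxΩ := hΩ.mem_nhds (hQΩ hx)
  constructor
  · refine (norm_fderiv_le_of_lieBracket_eq_smul (hYX x (hQΩ hx))).trans ?_
    gcongr
    linarith [norm_nonneg (fderiv ℝ Y x)]
  · refine (norm_fderiv_areaForm_le_of_lieBracket_eq_smul o (hX.differentiableAt hxΩ)
      ((hY.differentiableOn one_ne_zero).differentiableAt hxΩ) (hYX x (hQΩ hx))).trans ?_
    gcongr

lemma isTheta (h : TracksOn Y X Ω) (hΩ : IsOpen Ω) (hX : DifferentiableOn ℝ X Ω)
    (hY : ContDiffOn ℝ 1 Y Ω) (hQ : IsCompact Q) (hQΩ : Q ⊆ Ω)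
    (hΦ : ∀ᶠ q in l, FlowJoined Y Q q (Φ q)) :
    X =Θ[l] (X ∘ Φ) ∧ (fun q ↦ o.areaForm (X q) (Y q)) =Θ[l]
      ((fun q ↦ o.areaForm (X q) (Y q)) ∘ Φ) := by
  obtain ⟨C, hC, hbound⟩ := h.exists_bound o hΩ hX hY hQ hQΩ
  have hXd : ∀ x ∈ Q, DifferentiableAt ℝ X x :=
    fun x hx ↦ hX.differentiableAt (hΩ.mem_nhds (hQΩ hx))
  have hYd : ∀ x ∈ Q, DifferentiableAt ℝ Y x :=
    fun x hx ↦ (hY.differentiableOn one_ne_zero).differentiableAt (hΩ.mem_nhds (hQΩ hx))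
  exact ⟨FlowJoined.isTheta hC hΦ hXd fun x hx ↦ (hbound x hx).1,
    FlowJoined.isTheta hC hΦ (fun x hx ↦ differentiableAt_areaForm o (hXd x hx) (hYd x hx))
      fun x hx ↦ (hbound x hx).2⟩

lemma exists_transversal (h : TracksOn Y X Ω) (hΩ : IsOpen Ω) (hX : AnalyticOnNhd ℝ X Ω)
    (hY : ContDiffOn ℝ 1 Y Ω) (hQ : IsCompact Q) (hQΩ : Q ⊆ Ω) (hpQ : Q ∈ 𝓝 p) (hYp : Y p ≠ 0)
    (hXp : ¬ ∀ᶠ q in 𝓝 p, X q = 0) :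
    ∃ σ : E → ℝ, ∀ᶠ q in 𝓝 p, ContinuousAt σ q ∧ (X q = 0 → σ q = 0) ∧
      FlowJoined Y Q q (p + σ q • o.rightAngleRotation (Y p)) := by
  have hp : p ∈ Ω := hQΩ (mem_of_mem_nhds hpQ)
  obtain ⟨σ, hσp, hσ⟩ := exists_flowProjection_coordinate o
    (hY.contDiffAt (hΩ.mem_nhds hp)) hYp hpQ
  have hσ0 : Tendsto σ (𝓝 p) (𝓝 0) := by
    simpa [hσp] using hσ.self_of_nhds.1.tendsto
  set line : ℝ → E := fun s ↦ p + s • o.rightAngleRotation (Y p)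
  have hXθ := (h.isTheta o hΩ hX.differentiableOn hY hQ hQΩ
    (hσ.mono fun q hq ↦ hq.2 : ∀ᶠ q in 𝓝 p, FlowJoined Y Q q (line (σ q)))).1
  have hXline : AnalyticAt ℝ (X ∘ line) 0 :=
    AnalyticAt.comp (by simpa [line] using hX p hp) (by fun_prop)
  rcases hXline.eventually_eq_zero_or_eventually_ne_zero with hzero | hne
  · exact (hXp ((hXθ.eq_zero_iff.and (hσ0.eventually hzero)).mono fun _ hq ↦ hq.1.2 hq.2)).elim
  refine ⟨σ, ?_⟩
  filter_upwards [hσ, hσ0.eventually (eventually_nhdsWithin_iff.1 hne), hXθ.eq_zero_iff]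
    with q ⟨hcont, hjoin⟩ hneq hXq
  refine ⟨hcont, fun hq ↦ ?_, hjoin⟩
  by_contra hσq
  exact hneq hσq (hXq.1 hq)

end TracksOn

end Tracking

section Dichotomy

lemma isTheta_one_of_continuousAt {Z F : Type*} [TopologicalSpace Z] [NormedAddCommGroup F]
    {f : Z → F} {x : Z} (hf : ContinuousAt f x) (hx : f x ≠ 0) :
    f =Θ[𝓝 x] fun _ ↦ (1 : ℝ) := by
  refine ⟨hf.tendsto.isBigO_one ℝ, (isBigO_const_left_iff_pos_le_norm one_ne_zero).2
    ⟨‖f x‖ / 2, by positivity, ?_⟩⟩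
  exact (hf.norm.eventually_const_lt (half_lt_self (norm_pos_iff.2 hx))).mono fun _ h ↦ h.le

lemma isBigO_or_isLittleO_bilin_of_analyticAt {F₁ F₂ F₃ : Type*} [NormedAddCommGroup F₁]
    [NormedSpace ℝ F₁] [NormedAddCommGroup F₂] [NormedSpace ℝ F₂] [NormedAddCommGroup F₃]
    [NormedSpace ℝ F₃] (B : F₁ →L[ℝ] F₂ →L[ℝ] F₃) {φ : ℝ → F₁} {η : ℝ → F₂} {s₀ : ℝ}
    (hφ : AnalyticAt ℝ φ s₀) (hη : ContinuousAt η s₀) :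
    (φ =O[𝓝 s₀] fun s ↦ B (φ s) (η s)) ∨ (fun s ↦ B (φ s) (η s)) =o[𝓝 s₀] φ := by
  by_cases hzero : ∀ᶠ s in 𝓝 s₀, φ s = 0
  · refine .inr ((isLittleO_zero φ _).congr' ?_ EventuallyEq.rfl)
    exact hzero.mono fun s hs ↦ by simp [hs]
  obtain ⟨k, g, hg, hgs₀, hφg⟩ := hφ.exists_eventuallyEq_pow_smul_nonzero_iff.2 hzero
  have hgφ : (fun s ↦ (s - s₀) ^ k • g s) =ᶠ[𝓝 s₀] φ := EventuallyEq.symm hφg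
  have hBφ : (fun s ↦ B (φ s) (η s)) =ᶠ[𝓝 s₀] fun s ↦ (s - s₀) ^ k • B (g s) (η s) :=
    hφg.mono fun s hs ↦ by simp [hs]
  have hBg : ContinuousAt (fun s ↦ B (g s) (η s)) s₀ :=
    (B.continuous.continuousAt.comp hg.continuousAt).clm_apply hη
  have hg1 := isTheta_one_of_continuousAt hg.continuousAt hgs₀
  by_cases h0 : B (g s₀) (η s₀) = 0
  · have hlittle : (fun s ↦ B (g s) (η s)) =o[𝓝 s₀] g :=
      ((isLittleO_one_iff ℝ).2 (h0 ▸ hBg.tendsto)).trans_isBigO hg1.2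
    exact .inr (((isBigO_refl _ _).smul_isLittleO hlittle).congr' hBφ.symm hgφ)
  · have hbig : g =O[𝓝 s₀] fun s ↦ B (g s) (η s) :=
      hg1.1.trans (isTheta_one_of_continuousAt hBg h0).2
    exact .inl (((isBigO_refl _ _).smul hbig).congr' hgφ hBφ.symm)

/-- The direction of `X` stays uniformly away from the line `ℝ v` near `p`, possibly in the limit
of zeros of `X`. -/
def IsTransverseAt (X : E → E) (p v : E) : Prop :=
  X =O[𝓝 p] fun q ↦ o.areaForm (X q) v

/-- The direction of `X` approaches the line `ℝ v` near `p`. -/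
def IsTangentAt (X : E → E) (p v : E) : Prop :=
  (fun q ↦ o.areaForm (X q) v) =o[𝓝 p] X

variable {o} {X V : E → E} {p v : E}

lemma isLittleO_areaForm_sub (hV : ContinuousAt V p) :
    (fun q ↦ o.areaForm (X q) (V q) - o.areaForm (X q) (V p)) =o[𝓝 p] X := by
  have hVp : (fun q ↦ V q - V p) =o[𝓝 p] fun _ ↦ (1 : ℝ) :=
    (isLittleO_one_iff ℝ).2 (tendsto_sub_nhds_zero_iff.2 hV)
  have hle : (fun q ↦ o.areaForm (X q) (V q) - o.areaForm (X q) (V p)) =O[𝓝 p]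
      fun q ↦ ‖X q‖ * ‖V q - V p‖ := .of_bound' <| .of_forall fun q ↦ by
    simpa only [← map_sub, Real.norm_eq_abs, abs_mul, abs_norm] using o.abs_areaForm_le _ _
  simpa using hle.trans_isLittleO ((isBigO_refl (‖X ·‖) _).mul_isLittleO hVp.norm_left)

lemma isTangentAt_iff_isLittleO (hV : ContinuousAt V p) :
    IsTangentAt o X p (V p) ↔ (fun q ↦ o.areaForm (X q) (V q)) =o[𝓝 p] X := by
  have hsub := isLittleO_areaForm_sub (o := o) (X := X) hV
  exact ⟨fun h ↦ by simpa using hsub.add h, fun h ↦ by simpa [IsTangentAt] using h.sub hsub⟩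

lemma isTransverseAt_iff_isBigO (hV : ContinuousAt V p) :
    IsTransverseAt o X p (V p) ↔ X =O[𝓝 p] fun q ↦ o.areaForm (X q) (V q) := by
  have hsub := isLittleO_areaForm_sub (o := o) (X := X) hV
  constructor
  · intro h
    simpa using h.trans (hsub.trans_isBigO h).right_isBigO_add
  · intro h
    have := (hsub.trans_isBigO h).right_isBigO_sub
    simpa [IsTransverseAt] using h.trans this

lemma IsTangentAt.not_isTransverseAt (h : IsTangentAt o X p v) (hX : ¬ ∀ᶠ q in 𝓝 p, X q = 0) :
    ¬ IsTransverseAt o X p v := fun h' ↦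
  isLittleO_irrefl (not_eventually.1 hX) (h'.trans_isLittleO h)

lemma IsTangentAt.isTransverseAt_rightAngleRotation (h : IsTangentAt o X p v) (hv : v ≠ 0) :
    IsTransverseAt o X p (o.rightAngleRotation v) := by
  have hnormal : (fun q ↦ o.areaForm v (X q) • o.rightAngleRotation v) =o[𝓝 p]
      fun q ↦ ‖v‖ ^ 2 • X q := by
    refine (isLittleO_const_smul_right (by positivity)).2 ?_
    refine IsBigO.trans_isLittleO (.of_bound ‖v‖ (.of_forall fun q ↦ ?_)) h
    rw [norm_smul, LinearIsometryEquiv.norm_map, o.areaForm_swap, norm_neg, mul_comm]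
  have htangential : (fun q ↦ ‖v‖ ^ 2 • X q) =O[𝓝 p] fun q ↦ inner ℝ v (X q) • v := by
    refine hnormal.right_isBigO_sub.congr_right fun q ↦ ?_
    rw [norm_sq_smul_eq_inner_smul_add_areaForm_smul o, add_sub_cancel_right]
  refine ((isBigO_const_smul_left (by positivity)).1 htangential).trans
    (.of_bound ‖v‖ (.of_forall fun q ↦ ?_))
  rw [norm_smul, mul_comm, o.areaForm_rightAngleRotation_right, real_inner_comm]

end Dichotomy

section LocalStructure

variable {X Y : E → E} {p : E} {Ω Q : Set E}

namespace TracksOn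

lemma eventually_flowJoined_of_eq_zero (h : TracksOn Y X Ω) (hΩ : IsOpen Ω)
    (hX : AnalyticOnNhd ℝ X Ω) (hY : ContDiffOn ℝ 1 Y Ω) (hQ : IsCompact Q) (hQΩ : Q ⊆ Ω)
    (hpQ : Q ∈ 𝓝 p) (hYp : Y p ≠ 0) (hXp : ¬ ∀ᶠ q in 𝓝 p, X q = 0) :
    ∀ᶠ q in 𝓝 p, X q = 0 → FlowJoined Y Q q p := by
  set o : Orientation ℝ E (Fin 2) := (finBasisOfFinrankEq ℝ E Fact.out).orientation
  obtain ⟨σ, hσ⟩ := h.exists_transversal o hΩ hX hY hQ hQΩ hpQ hYp hXp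
  filter_upwards [hσ] with q ⟨_, hσ0, hjoin⟩ hq
  simpa [hσ0 hq] using hjoin

lemma eventually_isTransverseAt_or_isTangentAt (h : TracksOn Y X Ω) (hΩ : IsOpen Ω)
    (hX : AnalyticOnNhd ℝ X Ω) (hY : ContDiffOn ℝ 1 Y Ω) (hp : p ∈ Ω) (hYp : Y p ≠ 0)
    (hXp : ¬ ∀ᶠ q in 𝓝 p, X q = 0) :
    (∀ᶠ q in 𝓝 p, X q = 0 → IsTransverseAt o X q (Y q)) ∨
      ∀ᶠ q in 𝓝 p, X q = 0 → IsTangentAt o X q (Y q) := by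
  obtain ⟨Q, hpQ, hQΩ, hQ⟩ := local_compact_nhds (hΩ.mem_nhds hp)
  obtain ⟨σ, hσ⟩ := h.exists_transversal o hΩ hX hY hQ hQΩ hpQ hYp hXp
  set line : ℝ → E := fun s ↦ p + s • o.rightAngleRotation (Y p) with hline
  have hline0 : ContinuousAt line 0 := by fun_prop
  have hXline : AnalyticAt ℝ (X ∘ line) 0 :=
    AnalyticAt.comp (by simpa [hline] using hX p hp) (by fun_prop)
  have hYline : ContinuousAt (Y ∘ line) 0 :=
    ContinuousAt.comp (by simpa [hline] using hY.continuousOn.continuousAt (hΩ.mem_nhds hp)) hline0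
  have hlocal : ∀ᶠ q in 𝓝 p, X q = 0 → ContinuousAt Y q ∧ Tendsto σ (𝓝 q) (𝓝 0) ∧
      X =Θ[𝓝 q] ((X ∘ line) ∘ σ) ∧ (fun x ↦ o.areaForm (X x) (Y x)) =Θ[𝓝 q]
        ((fun s ↦ o.areaForm (X (line s)) (Y (line s))) ∘ σ) := by
    filter_upwards [hσ.eventually_nhds, hΩ.mem_nhds hp] with q hq hqΩ hXq
    refine ⟨hY.continuousOn.continuousAt (hΩ.mem_nhds hqΩ), ?_,
      h.isTheta o hΩ hX.differentiableOn hY hQ hQΩ (hq.mono fun x hx ↦ hx.2.2)⟩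
    simpa only [hq.self_of_nhds.2.1 hXq] using hq.self_of_nhds.1.tendsto
  rcases isBigO_or_isLittleO_bilin_of_analyticAt o.areaForm' hXline hYline with hbig | hlittle
  · refine .inl (hlocal.mono fun q hq hXq ↦ ?_)
    obtain ⟨hYq, hσq, hXθ, hωθ⟩ := hq hXq
    exact (isTransverseAt_iff_isBigO hYq).2
      (hXθ.1.trans ((hbig.comp_tendsto hσq).trans hωθ.2))
  · refine .inr (hlocal.mono fun q hq hXq ↦ ?_)
    obtain ⟨hYq, hσq, hXθ, hωθ⟩ := hq hXq
    exact (isTangentAt_iff_isLittleO hYq).2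
      (hωθ.1.trans_isLittleO ((hlittle.comp_tendsto hσq).trans_isBigO hXθ.2))

end TracksOn

end LocalStructure

section TransverseField

/-- `v` itself if it is transverse to `X` at `p`, and otherwise `v` rotated by a right angle. It is
transverse to `X` as soon as `v` is either transverse or tangent. -/
noncomputable def transverseVector (X : E → E) (p v : E) : E :=
  open Classical in if IsTransverseAt o X p v then v else o.rightAngleRotation v

variable {ι : Type*} [LinearOrder ι] [LocallyFiniteOrderBot ι] {X Y : E → E} {Z : ι → E → E}
  {i : ι} {p : E} {Ω K : Set E}

lemma transverseVector_ne_zero {v : E} (hv : v ≠ 0) : transverseVector o X p v ≠ 0 := by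
  unfold transverseVector
  split_ifs
  · exact hv
  · exact (map_ne_zero_iff _ o.rightAngleRotation.injective).2 hv

lemma isTransverseAt_transverseVector {v : E} (hv : v ≠ 0)
    (h : IsTransverseAt o X p v ∨ IsTangentAt o X p v) :
    IsTransverseAt o X p (transverseVector o X p v) := by
  unfold transverseVector
  split_ifs with htrans
  · exact htrans
  · exact (h.resolve_left htrans).isTransverseAt_rightAngleRotation hv

lemma TracksOn.continuousWithinAt_transverseVector (h : TracksOn Y X Ω) (hΩ : IsOpen Ω)
    (hX : AnalyticOnNhd ℝ X Ω) (hY : ContDiffOn ℝ 1 Y Ω) (hKΩ : K ⊆ Ω)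
    (hK : ∀ q ∈ K, X q = 0 ∧ ¬ ∀ᶠ x in 𝓝 q, X x = 0) (hp : p ∈ K) (hYp : Y p ≠ 0) :
    ContinuousWithinAt (fun q ↦ transverseVector o X q (Y q)) K p := by
  have hYcont : ContinuousWithinAt Y K p := (hY.continuousOn.mono hKΩ) p hp
  rcases h.eventually_isTransverseAt_or_isTangentAt o hΩ hX hY (hKΩ hp) hYp (hK p hp).2
    with htrans | htan
  · refine hYcont.congr_of_eventuallyEq_of_mem ?_ hp
    filter_upwards [nhdsWithin_le_nhds htrans, self_mem_nhdsWithin] with q hq hqK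
    exact if_pos (hq (hK q hqK).1)
  · refine (o.rightAngleRotation.continuous.continuousAt.comp_continuousWithinAt
      hYcont).congr_of_eventuallyEq_of_mem ?_ hp
    filter_upwards [nhdsWithin_le_nhds htan, self_mem_nhdsWithin] with q hq hqK
    exact if_neg ((hq (hK q hqK).1).not_isTransverseAt (hK q hqK).2)

lemma IsTriangularOn.eventually_isLeast (h : IsTriangularOn Z Ω) (hΩ : IsOpen Ω)
    (hX : AnalyticOnNhd ℝ X Ω) (hZ : ∀ j, ContDiffOn ℝ 1 (Z j) Ω)
    (htrack : ∀ j, TracksOn (Z j) X Ω) (hp : p ∈ Ω) (hXp : ¬ ∀ᶠ q in 𝓝 p, X q = 0)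
    (hi : IsLeast {j | Z j p ≠ 0} i) :
    ∀ᶠ q in 𝓝 p, X q = 0 → IsLeast {j | Z j q ≠ 0} i := by
  obtain ⟨Q, hpQ, hQΩ, hQ⟩ := local_compact_nhds (hΩ.mem_nhds hp)
  filter_upwards [(htrack i).eventually_flowJoined_of_eq_zero hΩ hX (hZ i) hQ hQΩ hpQ hi.1 hXp,
    ((hZ i).continuousOn.continuousAt (hΩ.mem_nhds hp)).eventually_ne hi.1] with q hjoin hne hq
  refine ⟨hne, fun j hj ↦ le_of_not_gt fun hji ↦ hj ?_⟩
  exact h.eq_zero_of_flowJoined hΩ hZ hQ hQΩ (fun m hm ↦ not_not.1 fun hm' ↦ (hi.2 hm').not_gt hm)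
    hji (hjoin hq).symm

lemma IsTriangularOn.exists_continuousOn_isTransverseAt (h : IsTriangularOn Z Ω)
    (hΩ : IsOpen Ω) (hX : AnalyticOnNhd ℝ X Ω) (hZ : ∀ j, ContDiffOn ℝ 1 (Z j) Ω)
    (htrack : ∀ j, TracksOn (Z j) X Ω) (hKΩ : K ⊆ Ω)
    (hK : ∀ q ∈ K, X q = 0 ∧ ¬ ∀ᶠ x in 𝓝 q, X x = 0) (hne : ∀ q ∈ K, ∃ j, Z j q ≠ 0) :
    ∃ w : E → E, ContinuousOn w K ∧ ∀ q ∈ K, w q ≠ 0 ∧ IsTransverseAt o X q (w q) := by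
  have hexists : ∀ q ∈ K, ∃ w i, IsLeast {j | Z j q ≠ 0} i ∧ w = transverseVector o X q (Z i q) :=
    fun q hq ↦ by
      obtain ⟨i, hi⟩ := WellFoundedLT.exists_minimal inferInstance {j | Z j q ≠ 0} (hne q hq)
      exact ⟨_, i, minimal_iff_isLeast.1 hi, rfl⟩
  choose! w hw using hexists
  refine ⟨w, fun p hp ↦ ?_, fun q hq ↦ ?_⟩
  · obtain ⟨i, hi, -⟩ := hw p hp
    refine ((htrack i).continuousWithinAt_transverseVector o hΩ hX (hZ i) hKΩ hK hp
      hi.1).congr_of_eventuallyEq_of_mem ?_ hp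
    filter_upwards [nhdsWithin_le_nhds (h.eventually_isLeast hΩ hX hZ htrack (hKΩ hp) (hK p hp).2
      hi), self_mem_nhdsWithin] with q hq hqK
    obtain ⟨j, hj, hwq⟩ := hw q hqK
    rw [hwq, hj.unique (hq (hK q hqK).1)]
  · obtain ⟨i, hi, hwq⟩ := hw q hq
    have halt := (htrack i).eventually_isTransverseAt_or_isTangentAt o hΩ hX (hZ i) (hKΩ hq) hi.1
      (hK q hq).2
    rw [hwq]
    exact ⟨transverseVector_ne_zero o hi.1, isTransverseAt_transverseVector o hi.1 <|
      halt.imp (fun h ↦ h.self_of_nhds (hK q hq).1) fun h ↦ h.self_of_nhds (hK q hq).1⟩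

end TransverseField

section Perturbation

lemma exists_continuous_eqOn {E F : Type*} [NormedAddCommGroup E] [NormedAddCommGroup F]
    [NormedSpace ℝ F] [FiniteDimensional ℝ F] {K : Set E} (hK : IsClosed K) {w : E → F}
    (hw : ContinuousOn w K) : ∃ v : E → F, Continuous v ∧ EqOn v w K := by
  obtain ⟨v, hv⟩ := ContinuousMap.exists_restrict_eq hK ⟨K.domRestrict w, hw.domRestrict⟩
  exact ⟨v, v.continuous, fun q hq ↦ congr($hv ⟨q, hq⟩)⟩

variable {X : E → E} {D : Set E}

lemma eventually_add_smul_ne_zero (hD : IsCompact D) (hX : ∀ p ∈ D, ContinuousAt X p) {v : E → E}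
    (hv : Continuous v)
    (hXv : ∀ p ∈ D, X p = 0 → v p ≠ 0 ∧ IsTransverseAt o X p (v p)) :
    ∀ᶠ δ in 𝓝[≠] (0 : ℝ), ∀ q ∈ D, X q + δ • v q ≠ 0 := by
  refine eventually_nhdsWithin_iff.2 ?_
  suffices ∀ᶠ δ in 𝓝 (0 : ℝ), ∀ q ∈ D, δ ≠ 0 → X q + δ • v q ≠ 0 from
    this.mono fun δ hδ hδ0 q hq ↦ hδ q hq hδ0
  refine hD.eventually_forall_of_forall_eventually fun p hp ↦ ?_
  by_cases hXp : X p = 0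
  · obtain ⟨hvp, htrans⟩ := hXv p hp hXp
    have hzero := ((isTransverseAt_iff_isBigO hv.continuousAt).1 htrans).eq_zero_imp
    rw [nhds_prod_eq]
    filter_upwards [(hzero.and (hv.continuousAt.eventually_ne hvp)).prod_inr (𝓝 (0 : ℝ))]
      with ⟨δ, q⟩ ⟨hq, hvq⟩ hδ hsum
    have hXq : X q = 0 := hq (by simp [eq_neg_of_add_eq_zero_left hsum])
    rw [hXq, zero_add] at hsum
    exact smul_ne_zero hδ hvq hsum
  · have hcont : ContinuousAt (fun z : ℝ × E ↦ X z.2 + z.1 • v z.2) (0, p) :=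
      ((hX p hp).comp continuousAt_snd).add (by fun_prop)
    exact (hcont.eventually_ne (by simpa using hXp)).mono fun _ hz _ ↦ hz

lemma exists_continuousOn_near_ne_zero (hD : IsCompact D) (hX : ∀ p ∈ D, ContinuousAt X p)
    {w : E → E} (hw : ContinuousOn w {p ∈ D | X p = 0})
    (hXw : ∀ p ∈ {p ∈ D | X p = 0}, w p ≠ 0 ∧ IsTransverseAt o X p (w p)) {ε : ℝ} (hε : 0 < ε) :
    ∃ X' : E → E, ContinuousOn X' D ∧ (∀ p ∈ D, ‖X' p - X p‖ < ε) ∧ ∀ p ∈ D, X' p ≠ 0 := by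
  have hXD : ContinuousOn X D := fun p hp ↦ (hX p hp).continuousWithinAt
  obtain ⟨v, hv, hvw⟩ := exists_continuous_eqOn
    (hXD.preimage_isClosed_of_isClosed hD.isClosed isClosed_singleton) hw
  have hne := eventually_add_smul_ne_zero o hD hX hv fun p hp hXp ↦ by
    simpa only [hvw ⟨hp, hXp⟩] using hXw p ⟨hp, hXp⟩
  have hsmall : ∀ᶠ δ in 𝓝 (0 : ℝ), ∀ q ∈ D, ‖δ • v q‖ < ε := by
    refine hD.eventually_forall_of_forall_eventually fun q _ ↦ ?_
    have hcont : ContinuousAt (fun z : ℝ × E ↦ ‖z.1 • v z.2‖) (0, q) := by fun_prop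
    exact hcont.tendsto.eventually_lt_const (by simpa using hε)
  obtain ⟨δ, hδ0, hδε⟩ := (hne.and (nhdsWithin_le_nhds hsmall)).exists
  exact ⟨fun q ↦ X q + δ • v q, hXD.add (by fun_prop), fun q hq ↦ by simpa using hδε q hq, hδ0⟩

end Perturbation

end Plane

lemma not_eventually_eq_zero_of_zeros_subset {E F : Type*} [NormedAddCommGroup E] [NormedSpace ℝ E]
    [Nontrivial E] [NormedAddCommGroup F] [NormedSpace ℝ F] {X : E → F} {U : Set E}
    (hX : AnalyticOnNhd ℝ X (closure U)) (hU : IsOpen U) (hUc : IsCompact (closure U))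
    (hzeros : {p ∈ closure U | X p = 0} ⊆ U) {p : E} (hp : p ∈ U) :
    ¬ ∀ᶠ q in 𝓝 p, X q = 0 := by
  intro hlocal
  set C := connectedComponentIn U p
  have hCU : C ⊆ U := connectedComponentIn_subset U p
  have hXC : EqOn X 0 C :=
    (hX.mono (hCU.trans subset_closure)).eqOn_zero_of_preconnected_of_eventuallyEq_zero
      isPreconnected_connectedComponentIn (mem_connectedComponentIn hp) hlocal
  have hXcl : EqOn X 0 (closure C) :=
    hXC.of_subset_closure (hX.continuousOn.mono (closure_mono hCU)) continuousOn_const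
      subset_closure subset_rfl
  have hclU : closure C ⊆ U := fun q hq ↦ hzeros ⟨closure_mono hCU hq, hXcl hq⟩
  have hclC : closure C ⊆ C :=
    isPreconnected_connectedComponentIn.closure.subset_connectedComponentIn
      (subset_closure (mem_connectedComponentIn hp)) hclU
  have hCuniv : C = univ := IsClopen.eq_univ
    ⟨isClosed_of_closure_subset hclC, hU.connectedComponentIn⟩
    ⟨p, mem_connectedComponentIn hp⟩
  have hcompact : IsCompact (univ : Set E) :=
    hUc.of_isClosed_subset isClosed_univ (hCuniv ▸ hCU.trans subset_closure)
  exact noncompact_univ E hcompact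

end PlanarTracking

open PlanarTracking Module Topology

theorem common_zero_of_supersolvable_tracking_real_general {E ι : Type*} [NormedAddCommGroup E]
    [InnerProductSpace ℝ E] [Fact (finrank ℝ E = 2)] [LinearOrder ι] [LocallyFiniteOrderBot ι]
    {Ω U : Set E} {X : E → E} {Y : ι → E → E} (hΩ : IsOpen Ω) (hX : AnalyticOnNhd ℝ X Ω)
    (hU : IsOpen U) (hUc : IsCompact (closure U)) (hUΩ : closure U ⊆ Ω)
    (hzeros : {p ∈ closure U | X p = 0} ⊆ U)
    (hess : ∃ ε > 0, ∀ X' : E → E, ContinuousOn X' (closure U) →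
      (∀ p ∈ closure U, ‖X' p - X p‖ < ε) → ∃ p ∈ closure U, X' p = 0)
    (hY : ∀ i, ContDiffOn ℝ 1 (Y i) Ω) (htrack : ∀ i, TracksOn (Y i) X Ω)
    (htri : IsTriangularOn Y Ω) :
    ∃ p ∈ closure U, X p = 0 ∧ ∀ i, Y i p = 0 := by
  by_contra! hcommon
  have := FiniteDimensional.of_fact_finrank_eq_two (K := ℝ) (V := E)
  have : Nontrivial E := nontrivial_of_finrank_eq_succ (Fact.out : finrank ℝ E = 2)
  set o : Orientation ℝ E (Fin 2) := (finBasisOfFinrankEq ℝ E Fact.out).orientation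
  set K := {p ∈ closure U | X p = 0}
  have hlocal : ∀ p ∈ K, X p = 0 ∧ ¬ ∀ᶠ q in 𝓝 p, X q = 0 := fun p hp ↦
    ⟨hp.2, not_eventually_eq_zero_of_zeros_subset (hX.mono hUΩ) hU hUc hzeros (hzeros hp)⟩
  obtain ⟨w, hw, hXw⟩ := htri.exists_continuousOn_isTransverseAt o hΩ hX hY htrack
    (fun p hp ↦ hUΩ hp.1) hlocal fun p hp ↦ hcommon p hp.1 hp.2
  obtain ⟨ε, hε, hess⟩ := hess
  obtain ⟨X', hX', hnear, hne⟩ := exists_continuousOn_near_ne_zero o hUc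
    (fun p hp ↦ (hX p (hUΩ hp)).continuousAt) hw hXw hε
  obtain ⟨p, hp, hp0⟩ := hess X' hX' hnear
  exact hne p hp hp0

/-- **Hirsch, Theorem 1.3(b) (local form).**
A supersolvable family `Y₁, …, Y_d` of real-analytic vector fields tracking `X`
(the spans `span{Y₁,…,Y_k}` forming a chain of ideals) has a common zero in every
essential `X`-block. -/
theorem common_zero_of_supersolvable_tracking_real
    (Ω : Set (EuclideanSpace ℝ (Fin 2))) (hΩ : IsOpen Ω)
    (X : EuclideanSpace ℝ (Fin 2) → EuclideanSpace ℝ (Fin 2))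
    (hX : AnalyticOnNhd ℝ X Ω)
    (U : Set (EuclideanSpace ℝ (Fin 2))) (hUopen : IsOpen U) (hUconn : IsConnected U)
    (hUcomp : IsCompact (closure U)) (hUΩ : closure U ⊆ Ω)
    (K : Set (EuclideanSpace ℝ (Fin 2)))
    (hK : K = {p ∈ closure U | X p = 0}) (hKU : K ⊆ U)
    (hess : ∃ ε > 0, ∀ X' : EuclideanSpace ℝ (Fin 2) → EuclideanSpace ℝ (Fin 2),
      ContinuousOn X' (closure U) → (∀ p ∈ closure U, ‖X' p - X p‖ < ε) →
      ∃ p ∈ closure U, X' p = 0)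
    (d : ℕ)
    (Y : Fin d → EuclideanSpace ℝ (Fin 2) → EuclideanSpace ℝ (Fin 2))
    (hY : ∀ i, AnalyticOnNhd ℝ (Y i) Ω)
    -- each `Y i` tracks `X`
    (f : Fin d → EuclideanSpace ℝ (Fin 2) → ℝ) (hf : ∀ i, ContinuousOn (f i) Ω)
    (htrack : ∀ i, ∀ p ∈ Ω,
      fderiv ℝ X p (Y i p) - fderiv ℝ (Y i) p (X p) = f i p • X p)
    -- supersolvability: for `j ≤ k`, the bracket `[Y i, Y j]` is a constant-coefficient
    -- linear combination of `Y₁, …, Y_k`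
    (hsuper : ∀ i j k : Fin d, j ≤ k →
      ∃ c : Fin d → ℝ, ∀ p ∈ Ω,
        fderiv ℝ (Y j) p (Y i p) - fderiv ℝ (Y i) p (Y j p)
          = ∑ m ∈ Finset.Iic k, c m • Y m p) :
    ∃ p ∈ K, ∀ i, Y i p = 0 := by
  have : Fact (finrank ℝ (EuclideanSpace ℝ (Fin 2)) = 2) := ⟨finrank_euclideanSpace_fin⟩
  subst hK
  obtain ⟨p, hpU, hXp, hYp⟩ := common_zero_of_supersolvable_tracking_real_general hΩ hX hUopen
    hUcomp hUΩ hKU hess (fun i ↦ (hY i).contDiffOn hΩ.uniqueDiffOn)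
    (fun i ↦ ⟨f i, hf i, htrack i⟩) fun i j _ ↦
      let ⟨c, hc⟩ := hsuper i j j le_rfl
      ⟨fun m _ ↦ c m, fun _ ↦ continuousOn_const, hc⟩
  exact ⟨p, ⟨hpU, hXp⟩, hYp⟩
end

section
/- Let Ω ⊆ ℝⁿ be open, let X, Y, Z : Ω → ℝⁿ be C² vector fields, and let f, g : Ω → ℝ be C¹ functions such that [Y,X] = f • X and [Z,X] = g • X pointwise on Ω, where [V,W](p) := DW(p)(V(p)) − DV(p)(W(p)). Then [Y,Z] tracks X: there exists a continuous function h : Ω → ℝ such that [[Y,Z],X](p) = h(p) • X(p) for all p ∈ Ω. -/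
open Set

/-!
Write `[Y, X] = f • X` and `[Z, X] = g • X`. By the Jacobi identity,
`[[Y, Z], X] = [Y, [Z, X]] - [Z, [Y, X]]`. The product rule turns the right-hand side into
`(Dg(Y) + g * f) • X - (Df(Z) + f * g) • X`, in which the products cancel, so `[Y, Z]` tracks `X`
with factor `Dg(Y) - Df(Z)`.
-/

open VectorField Filter Topology
open scoped ContDiff

section

variable {𝕜 E : Type*} [NontriviallyNormedField 𝕜] [NormedAddCommGroup E] [NormedSpace 𝕜 E]
  {s : Set E} {X Y Z : E → E} {f g : E → 𝕜} {p : E} {k m n : ℕ∞ω}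

variable (𝕜) in
/-- The vector field `Y` tracks `X` on `s`: the bracket `[Y, X]` is a function multiple of `X`
there. Hirsch asks for a continuous factor, which is the case `k = 0`; the parameter `k` records
the smoothness of the factor because bracketing two tracking fields costs one derivative. -/
def TracksOn (k : ℕ∞ω) (Y X : E → E) (s : Set E) : Prop :=
  ∃ f : E → 𝕜, ContDiffOn 𝕜 k f s ∧ ∀ p ∈ s, lieBracket 𝕜 Y X p = f p • X p

theorem lieBracket_eq_smul_of_eventuallyEq_smul {W : E → E} {c : 𝕜}
    (hg : DifferentiableAt 𝕜 g p) (hX : DifferentiableAt 𝕜 X p)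
    (hW : W =ᶠ[𝓝 p] fun q ↦ g q • X q) (hYX : lieBracket 𝕜 Y X p = c • X p) :
    lieBracket 𝕜 Y W p = (fderiv 𝕜 g p (Y p) + g p * c) • X p := by
  rw [EventuallyEq.rfl.lieBracket_vectorField_eq hW, lieBracket_smul_right hg hX, hYX,
    smul_smul, add_smul]

theorem lieBracket_lieBracket_eq_smul (hn : minSmoothness 𝕜 2 ≤ n)
    (hX : ContDiffAt 𝕜 n X p) (hY : ContDiffAt 𝕜 n Y p) (hZ : ContDiffAt 𝕜 n Z p)
    (hf : DifferentiableAt 𝕜 f p) (hg : DifferentiableAt 𝕜 g p)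
    (hYX : lieBracket 𝕜 Y X =ᶠ[𝓝 p] fun q ↦ f q • X q)
    (hZX : lieBracket 𝕜 Z X =ᶠ[𝓝 p] fun q ↦ g q • X q) :
    lieBracket 𝕜 (lieBracket 𝕜 Y Z) X p
      = (fderiv 𝕜 g p (Y p) - fderiv 𝕜 f p (Z p)) • X p := by
  have two_le : 2 ≤ n := le_minSmoothness.trans hn
  have hX' : DifferentiableAt 𝕜 X p := hX.differentiableAt (two_pos.trans_le two_le).ne'
  calc lieBracket 𝕜 (lieBracket 𝕜 Y Z) X p
      = lieBracket 𝕜 Y (lieBracket 𝕜 Z X) p - lieBracket 𝕜 Z (lieBracket 𝕜 Y X) p :=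
        eq_sub_of_add_eq (leibniz_identity_lieBracket hn hY hZ hX).symm
    _ = (fderiv 𝕜 g p (Y p) + g p * f p) • X p - (fderiv 𝕜 f p (Z p) + f p * g p) • X p := by
        rw [lieBracket_eq_smul_of_eventuallyEq_smul hg hX' hZX hYX.eq_of_nhds,
          lieBracket_eq_smul_of_eventuallyEq_smul hf hX' hYX hZX.eq_of_nhds]
    _ = (fderiv 𝕜 g p (Y p) - fderiv 𝕜 f p (Z p)) • X p := by module

theorem bracket_tracks_of_tracks_general (hs : IsOpen s)
    (hX : ContDiffOn 𝕜 n X s) (hY : ContDiffOn 𝕜 n Y s) (hZ : ContDiffOn 𝕜 n Z s)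
    (hYX : TracksOn 𝕜 k Y X s) (hZX : TracksOn 𝕜 k Z X s)
    (hn : minSmoothness 𝕜 2 ≤ n) (hmn : m ≤ n) (hmk : m + 1 ≤ k) :
    TracksOn 𝕜 m (lieBracket 𝕜 Y Z) X s := by
  obtain ⟨f, hf, hfX⟩ := hYX
  obtain ⟨g, hg, hgX⟩ := hZX
  refine ⟨fun p ↦ fderiv 𝕜 g p (Y p) - fderiv 𝕜 f p (Z p), ?_, fun p hp ↦ ?_⟩
  · exact ((hg.fderiv_of_isOpen hs hmk).clm_apply (hY.of_le hmn)).sub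
      ((hf.fderiv_of_isOpen hs hmk).clm_apply (hZ.of_le hmn))
  · have hsp : s ∈ 𝓝 p := hs.mem_nhds hp
    have k_ne_zero : k ≠ 0 := (one_pos.trans_le (le_add_self.trans hmk)).ne'
    exact lieBracket_lieBracket_eq_smul hn
      (hX.contDiffAt hsp) (hY.contDiffAt hsp) (hZ.contDiffAt hsp)
      ((hf.contDiffAt hsp).differentiableAt k_ne_zero)
      ((hg.contDiffAt hsp).differentiableAt k_ne_zero)
      (eventually_of_mem hsp hfX) (eventually_of_mem hsp hgX)

end

/-- **Hirsch, Proposition 2.1 (local form).**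
If `Y` and `Z` track `X` (with `C¹` tracking functions `f, g` and `C²` vector fields),
then the Lie bracket `[Y, Z]` tracks `X`. -/
theorem bracket_tracks_of_tracks
    (n : ℕ) (Ω : Set (EuclideanSpace ℝ (Fin n))) (hΩ : IsOpen Ω)
    (X Y Z : EuclideanSpace ℝ (Fin n) → EuclideanSpace ℝ (Fin n))
    (hX : ContDiffOn ℝ 2 X Ω) (hY : ContDiffOn ℝ 2 Y Ω) (hZ : ContDiffOn ℝ 2 Z Ω)
    (f g : EuclideanSpace ℝ (Fin n) → ℝ)
    (hf : ContDiffOn ℝ 1 f Ω) (hg : ContDiffOn ℝ 1 g Ω)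
    (htrackY : ∀ p ∈ Ω, fderiv ℝ X p (Y p) - fderiv ℝ Y p (X p) = f p • X p)
    (htrackZ : ∀ p ∈ Ω, fderiv ℝ X p (Z p) - fderiv ℝ Z p (X p) = g p • X p) :
    ∃ h : EuclideanSpace ℝ (Fin n) → ℝ, ContinuousOn h Ω ∧
      ∀ p ∈ Ω,
        fderiv ℝ X p ((fun q => fderiv ℝ Z q (Y q) - fderiv ℝ Y q (Z q)) p)
          - fderiv ℝ (fun q => fderiv ℝ Z q (Y q) - fderiv ℝ Y q (Z q)) p (X p)
          = h p • X p := by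
  obtain ⟨h, h_contDiff, h_bracket⟩ : TracksOn ℝ 0 (lieBracket ℝ Y Z) X Ω :=
    bracket_tracks_of_tracks_general hΩ hX hY hZ ⟨f, hf, htrackY⟩ ⟨g, hg, htrackZ⟩
      (by simp) (by simp) (by simp)
  exact ⟨h, h_contDiff.continuousOn, h_bracket⟩
end

section
/- Let 𝕜 be ℝ or ℂ, let Ω ⊆ 𝕜ⁿ be open, and let X, Y : Ω → 𝕜ⁿ be vector fields that are C¹ over 𝕜 (for 𝕜 = ℂ this means holomorphic with continuous derivative). Let f : Ω → 𝕜 be continuous with DX(p)(Y(p)) − DY(p)(X(p)) = f(p) • X(p) for all p ∈ Ω (Y tracks X). Let I ⊆ ℝ be an open interval containing t₀, let γ : I → Ω be an integral curve of Y, and let v : I → 𝕜ⁿ solve the variational equation along γ: v has derivative DY(γ(t))(v(t)) at every t ∈ I, with initial condition v(t₀) = X(γ(t₀)). Then for every t ∈ I the vectors v(t) and X(γ(t)) are linearly dependent over 𝕜. -/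
open Set

/-!
Along an integral curve `γ` of `Y`, the chain rule and the relation `[Y, X] = f • X` show that
`X ∘ γ` solves the variational equation perturbed by a scalar term,
`w' = DY(γ) w + f(γ) • w`. If `v` solves the variational equation itself, the integrating factor
`exp (∫ f ∘ γ)` turns `v` into a second solution of the perturbed equation with the same initial
value. Uniqueness for linear equations gives `X ∘ γ = exp (∫ f ∘ γ) • v`.
-/

section Uniqueness

variable {E : Type*} [NormedAddCommGroup E] [NormedSpace ℝ E] {u w : ℝ → E} {t₀ t₁ : ℝ}

theorem eqOn_uIcc_of_isIntegralCurveOn_of_lipschitzWith {V : ℝ → E → E} {K : NNReal}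
    (hV : ∀ t ∈ uIcc t₀ t₁, LipschitzWith K (V t)) (hu : IsIntegralCurveOn u V (uIcc t₀ t₁))
    (hw : IsIntegralCurveOn w V (uIcc t₀ t₁)) (h₀ : u t₀ = w t₀) :
    EqOn u w (uIcc t₀ t₁) := by
  rcases le_total t₀ t₁ with h | h
  · rw [uIcc_of_le h] at hV hu hw ⊢
    have hasDeriv_Ici {x : ℝ → E} (hx : IsIntegralCurveOn x V (Icc t₀ t₁)) :
        ∀ t ∈ Ico t₀ t₁, HasDerivWithinAt x (V t (x t)) (Ici t) t := fun t ht ↦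
      (hx t (Ico_subset_Icc_self ht)).mono_of_mem_nhdsWithin (Icc_mem_nhdsGE_of_mem ht)
    exact ODE_solution_unique_of_mem_Icc_right
      (fun t ht ↦ (hV t (Ico_subset_Icc_self ht)).lipschitzOnWith)
      hu.continuousOn (hasDeriv_Ici hu) (fun t _ ↦ mem_univ (u t))
      hw.continuousOn (hasDeriv_Ici hw) (fun t _ ↦ mem_univ (w t)) h₀
  · rw [uIcc_of_ge h] at hV hu hw ⊢
    have hasDeriv_Iic {x : ℝ → E} (hx : IsIntegralCurveOn x V (Icc t₁ t₀)) :
        ∀ t ∈ Ioc t₁ t₀, HasDerivWithinAt x (V t (x t)) (Iic t) t := fun t ht ↦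
      (hx t (Ioc_subset_Icc_self ht)).mono_of_mem_nhdsWithin (Icc_mem_nhdsLE_of_mem ht)
    exact ODE_solution_unique_of_mem_Icc_left
      (fun t ht ↦ (hV t (Ioc_subset_Icc_self ht)).lipschitzOnWith)
      hu.continuousOn (hasDeriv_Iic hu) (fun t _ ↦ mem_univ (u t))
      hw.continuousOn (hasDeriv_Iic hw) (fun t _ ↦ mem_univ (w t)) h₀

theorem eqOn_uIcc_of_isIntegralCurveOn_clm {𝕜 : Type*} [NontriviallyNormedField 𝕜]
    [NormedSpace 𝕜 E] {A : ℝ → E →L[𝕜] E} (hA : ContinuousOn A (uIcc t₀ t₁))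
    (hu : IsIntegralCurveOn u (fun t ↦ A t) (uIcc t₀ t₁))
    (hw : IsIntegralCurveOn w (fun t ↦ A t) (uIcc t₀ t₁)) (h₀ : u t₀ = w t₀) :
    EqOn u w (uIcc t₀ t₁) := by
  obtain ⟨K, hK⟩ := isCompact_uIcc.bddAbove_image hA.nnnorm
  exact eqOn_uIcc_of_isIntegralCurveOn_of_lipschitzWith
    (fun t ht ↦ (A t).lipschitz.weaken (hK (mem_image_of_mem _ ht))) hu hw h₀

end Uniqueness

theorem hasDerivWithinAt_integral_uIcc {F : Type*} [NormedAddCommGroup F] [NormedSpace ℝ F]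
    [CompleteSpace F] {g : ℝ → F} {t₀ t₁ t : ℝ} (hg : ContinuousOn g (uIcc t₀ t₁))
    (ht : t ∈ uIcc t₀ t₁) :
    HasDerivWithinAt (fun s ↦ ∫ r in t₀..s, g r) (g t) (uIcc t₀ t₁) t := by
  have : Fact (t ∈ uIcc t₀ t₁) := ⟨ht⟩
  exact intervalIntegral.integral_hasDerivWithinAt_right
    (hg.mono (uIcc_subset_uIcc_left ht)).intervalIntegrable
    (hg.stronglyMeasurableAtFilter_nhdsWithin measurableSet_uIcc t) (hg t ht)

section Tracking

variable {𝕜 : Type*} [RCLike 𝕜] {E : Type*} [NormedAddCommGroup E] [NormedSpace 𝕜 E]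
  [NormedSpace ℝ E] [IsScalarTower ℝ 𝕜 E]

theorem isIntegralCurveOn_exp_integral_smul {A : ℝ → E →L[𝕜] E} {g : ℝ → 𝕜} {u : ℝ → E}
    {t₀ t₁ : ℝ} (hg : ContinuousOn g (uIcc t₀ t₁))
    (hu : IsIntegralCurveOn u (fun t ↦ A t) (uIcc t₀ t₁)) :
    IsIntegralCurveOn (fun t ↦ NormedSpace.exp (∫ r in t₀..t, g r) • u t)
      (fun t ↦ (A t + g t • ContinuousLinearMap.id 𝕜 E : E →L[𝕜] E)) (uIcc t₀ t₁) := by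
  intro t ht
  have hexp : HasDerivWithinAt (fun s ↦ NormedSpace.exp (∫ r in t₀..s, g r))
      (g t * NormedSpace.exp (∫ r in t₀..t, g r)) (uIcc t₀ t₁) t :=
    hasDerivAt_exp.scomp_hasDerivWithinAt t (hasDerivWithinAt_integral_uIcc hg ht)
  refine (hexp.smul (hu t ht)).congr_deriv ?_
  simp [mul_smul, smul_comm (g t)]

theorem eqOn_exp_integral_smul_of_isIntegralCurveOn {A : ℝ → E →L[𝕜] E} {g : ℝ → 𝕜}
    {u w : ℝ → E} {t₀ t₁ : ℝ} (hA : ContinuousOn A (uIcc t₀ t₁))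
    (hg : ContinuousOn g (uIcc t₀ t₁)) (hu : IsIntegralCurveOn u (fun t ↦ A t) (uIcc t₀ t₁))
    (hw : IsIntegralCurveOn w (fun t ↦ (A t + g t • ContinuousLinearMap.id 𝕜 E : E →L[𝕜] E))
      (uIcc t₀ t₁))
    (h₀ : u t₀ = w t₀) :
    EqOn w (fun t ↦ NormedSpace.exp (∫ r in t₀..t, g r) • u t) (uIcc t₀ t₁) :=
  eqOn_uIcc_of_isIntegralCurveOn_clm (hA.add (hg.smul continuousOn_const)) hw
    (isIntegralCurveOn_exp_integral_smul hg hu) (by simp [h₀])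

theorem isIntegralCurveOn_comp_of_lieBracket_eq_smul {X Y : E → E} {g : ℝ → 𝕜} {γ : ℝ → E}
    {s : Set ℝ} (hX : ∀ t ∈ s, DifferentiableAt 𝕜 X (γ t))
    (htrack : ∀ t ∈ s, VectorField.lieBracket 𝕜 Y X (γ t) = g t • X (γ t))
    (hγ : IsIntegralCurveOn γ (fun _ ↦ Y) s) :
    IsIntegralCurveOn (X ∘ γ)
      (fun t ↦ (fderiv 𝕜 Y (γ t) + g t • ContinuousLinearMap.id 𝕜 E : E →L[𝕜] E)) s := by
  intro t ht
  have hchain : HasDerivWithinAt (X ∘ γ) (fderiv 𝕜 X (γ t) (Y (γ t))) s t :=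
    ((hX t ht).hasFDerivAt.restrictScalars ℝ).comp_hasDerivWithinAt t (hγ t ht)
  refine hchain.congr_deriv ?_
  simpa [VectorField.lieBracket, sub_eq_iff_eq_add'] using htrack t ht

theorem variational_solution_dependent_of_tracking_general {Ω : Set E} (hΩ : IsOpen Ω)
    {X Y : E → E} (hX : DifferentiableOn 𝕜 X Ω) (hY : ContDiffOn 𝕜 1 Y Ω)
    {f : E → 𝕜} (hf : ContinuousOn f Ω)
    (htrack : ∀ p ∈ Ω, VectorField.lieBracket 𝕜 Y X p = f p • X p)
    {I : Set ℝ} (hI : I.OrdConnected) {t₀ : ℝ} (ht₀ : t₀ ∈ I) {γ : ℝ → E} (hγΩ : MapsTo γ I Ω)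
    (hγ : IsIntegralCurveOn γ (fun _ ↦ Y) I) {v : ℝ → E}
    (hv : IsIntegralCurveOn v (fun t ↦ fderiv 𝕜 Y (γ t)) I) (hv₀ : v t₀ = X (γ t₀)) :
    ∀ t ∈ I, X (γ t) = NormedSpace.exp (∫ r in t₀..t, f (γ r)) • v t := by
  intro t ht
  have hsub : uIcc t₀ t ⊆ I := hI.uIcc_subset ht₀ ht
  have hA : ContinuousOn (fun r ↦ fderiv 𝕜 Y (γ r)) I :=
    (hY.continuousOn_fderiv_of_isOpen hΩ le_rfl).comp hγ.continuousOn hγΩ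
  have hg : ContinuousOn (fun r ↦ f (γ r)) I := hf.comp hγ.continuousOn hγΩ
  have hXγ := isIntegralCurveOn_comp_of_lieBracket_eq_smul
    (fun r hr ↦ hX.differentiableAt (hΩ.mem_nhds (hγΩ hr))) (fun r hr ↦ htrack _ (hγΩ hr)) hγ
  exact eqOn_exp_integral_smul_of_isIntegralCurveOn (hA.mono hsub) (hg.mono hsub)
    (hv.mono hsub) (hXγ.mono hsub) hv₀ right_mem_uIcc

end Tracking

/-- **Hirsch, key lemma in the proof of Proposition 2.3.**
If `Y` tracks `X` and `v` solves the variational equation of `Y` along an integral curve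
`γ` of `Y` with `v(t₀) = X(γ(t₀))`, then `v(t)` and `X(γ(t))` are linearly dependent for
all `t` (vanishing of the wedge `TΦ^Y_t(X_p) ∧ X` along the `Y`-curve). -/
theorem variational_solution_dependent_of_tracking
    (𝕜 : Type*) [RCLike 𝕜]
    (n : ℕ) (Ω : Set (EuclideanSpace 𝕜 (Fin n))) (hΩ : IsOpen Ω)
    (X Y : EuclideanSpace 𝕜 (Fin n) → EuclideanSpace 𝕜 (Fin n))
    (hX : ContDiffOn 𝕜 1 X Ω) (hY : ContDiffOn 𝕜 1 Y Ω)
    (f : EuclideanSpace 𝕜 (Fin n) → 𝕜) (hf : ContinuousOn f Ω)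
    (htrack : ∀ p ∈ Ω, fderiv 𝕜 X p (Y p) - fderiv 𝕜 Y p (X p) = f p • X p)
    (I : Set ℝ) (hIopen : IsOpen I) (hIinterval : I.OrdConnected)
    (t₀ : ℝ) (ht₀ : t₀ ∈ I)
    (γ : ℝ → EuclideanSpace 𝕜 (Fin n)) (hγΩ : ∀ t ∈ I, γ t ∈ Ω)
    (hγ : ∀ t ∈ I, HasDerivAt γ (Y (γ t)) t)
    (v : ℝ → EuclideanSpace 𝕜 (Fin n))
    (hv : ∀ t ∈ I, HasDerivAt v (fderiv 𝕜 Y (γ t) (v t)) t)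
    (hv0 : v t₀ = X (γ t₀)) :
    ∀ t ∈ I, ¬ LinearIndependent 𝕜 ![v t, X (γ t)] := by
  intro t ht hli
  exact (LinearIndependent.pair_iff' (hli.ne_zero 0)).1 hli _
    (variational_solution_dependent_of_tracking_general hΩ (hX.differentiableOn one_ne_zero) hY hf
      htrack hIinterval ht₀ hγΩ (fun s hs ↦ (hγ s hs).hasDerivWithinAt)
      (fun s hs ↦ (hv s hs).hasDerivWithinAt) hv0 t ht).symm
end
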